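/- arXiv:2307.06723 — 2 statements merged into one kernel-verified Lean document; each statement's English description precedes it below -/
import Mathlib

section
/- Let V be a finite set and let X be a finite set of edges on V, i.e., unordered pairs of distinct elements of V. Then the number of triangles using only edges in X — that is, 3-element subsets {a,b,c} of V such that all three pairs {a,b}, {b,c}, {a,c} belong to X — is at most |X|^{3/2} (as real numbers). -/
/-!
For a vertex `v`, let `d v` be the number of edges and `t v` the number of triangles containing `v`.
Deleting `v` maps the triangles at `v` injectively to edges, so `t v ≤ |X|`; each triangle at `v` is
the union of two edges at `v`, so `t v ≤ (d v) ^ 2`. Hence `t v ≤ √|X| * d v`. Summing over `v` and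
double counting incidences gives `3 T ≤ √|X| * (2 |X|)` for the number `T` of triangles, which is
stronger than the claim.
-/

theorem sum_card_filter_mem_of_sized {V : Type*} [Fintype V] [DecidableEq V]
    (F : Finset (Finset V)) (r : ℕ) (hF : ∀ s ∈ F, s.card = r) :
    ∑ v : V, (F.filter (fun s => v ∈ s)).card = F.card * r := by
  have h := Finset.sum_card_bipartiteAbove_eq_sum_card_bipartiteBelow
    (s := (Finset.univ : Finset V)) (t := F) (fun v s => v ∈ s)
  simp only [Finset.bipartiteAbove, Finset.bipartiteBelow, Finset.filter_univ_mem] at h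
  rw [h, Finset.sum_congr rfl hF, Finset.sum_const, smul_eq_mul]

theorem card_triangles_at_le_card {V : Type*} [DecidableEq V]
    (X T : Finset (Finset V))
    (hT : ∀ t ∈ T, t.card = 3 ∧ ∀ e ⊆ t, e.card = 2 → e ∈ X) (v : V) :
    (T.filter (fun t => v ∈ t)).card ≤ X.card := by
  apply Finset.card_le_card_of_injOn (fun t => t.erase v)
  · intro t ht
    obtain ⟨ht, hv⟩ := Finset.mem_filter.1 ht
    refine (hT t ht).2 _ (Finset.erase_subset _ _) ?_
    rw [Finset.card_erase_of_mem hv, (hT t ht).1]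
  · intro s hs t ht h
    have h1 := (Finset.mem_filter.1 hs).2
    have h2 := (Finset.mem_filter.1 ht).2
    rw [← Finset.insert_erase h1, ← Finset.insert_erase h2]
    exact congrArg (insert v) h

theorem card_triangles_at_le_sq {V : Type*} [DecidableEq V]
    (X T : Finset (Finset V))
    (hT : ∀ t ∈ T, t.card = 3 ∧ ∀ e ⊆ t, e.card = 2 → e ∈ X) (v : V) :
    (T.filter (fun t => v ∈ t)).card ≤ (X.filter (fun e => v ∈ e)).card ^ 2 := by
  rw [sq, ← Finset.card_product]
  refine le_trans (Finset.card_le_card ?_)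
    (Finset.card_image_le (f := fun p : Finset V × Finset V => p.1 ∪ p.2))
  intro t ht
  obtain ⟨ht, hv⟩ := Finset.mem_filter.1 ht
  obtain ⟨hc, hX⟩ := hT t ht
  have h2 : (t.erase v).card = 2 := by rw [Finset.card_erase_of_mem hv, hc]
  obtain ⟨a, b, -, hab⟩ := Finset.card_eq_two.1 h2
  have ha : a ∈ t.erase v := by simp [hab]
  have hb : b ∈ t.erase v := by simp [hab]
  rw [Finset.mem_erase] at ha hb
  have key : ∀ c, c ≠ v ∧ c ∈ t → ({v, c} : Finset V) ∈ X.filter (fun e => v ∈ e) := by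
    intro c hc
    refine Finset.mem_filter.2 ⟨hX _ ?_ (Finset.card_pair hc.1.symm), by simp⟩
    simp [Finset.insert_subset_iff, hv, hc.2]
  refine Finset.mem_image.2 ⟨({v, a}, {v, b}), Finset.mem_product.2 ⟨key a ha, key b hb⟩, ?_⟩
  rw [← Finset.insert_erase hv, hab]
  ext x
  simp only [Finset.mem_union, Finset.mem_insert, Finset.mem_singleton]
  tauto

/-- **Folklore triangle-counting bound.** If `X` is a finite set of edges
(unordered pairs, i.e. 2-element subsets) on a finite vertex set `V`, then the
number of triangles (3-element subsets of `V` all of whose 2-element subsets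
lie in `X`) is at most `|X|^{3/2}`. -/
theorem stmt_0 {V : Type*} [Fintype V] [DecidableEq V]
    (X : Finset (Finset V)) (hX : ∀ e ∈ X, e.card = 2) :
    ({t : Finset V | t.card = 3 ∧ ∀ e ⊆ t, e.card = 2 → e ∈ X}.ncard : ℝ)
      ≤ (X.card : ℝ) ^ ((3 : ℝ) / 2) := by
  classical
  obtain ⟨T, hTs⟩ :=
    (Set.toFinite {t : Finset V | t.card = 3 ∧ ∀ e ⊆ t, e.card = 2 → e ∈ X}).exists_finset_coe
  rw [← hTs, Set.ncard_coe_finset]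
  have hT : ∀ t ∈ T, t.card = 3 ∧ ∀ e ⊆ t, e.card = 2 → e ∈ X := by
    intro t ht
    have : t ∈ (T : Set (Finset V)) := ht
    rwa [hTs] at this
  have hpow : (X.card : ℝ) ^ ((3 : ℝ) / 2) = √X.card * X.card := by
    rw [show (3 : ℝ) / 2 = 1 / 2 + 1 by norm_num,
      Real.rpow_add_of_nonneg (by positivity) (by norm_num) (by norm_num), Real.rpow_one,
      Real.sqrt_eq_rpow]
  have hv : ∀ v : V, ((T.filter (fun t => v ∈ t)).card : ℝ)
      ≤ √X.card * (X.filter (fun e => v ∈ e)).card := by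
    intro v
    have h1 : ((T.filter (fun t => v ∈ t)).card : ℝ) ≤ X.card := by
      exact_mod_cast card_triangles_at_le_card X T hT v
    have h2 : ((T.filter (fun t => v ∈ t)).card : ℝ)
        ≤ ((X.filter (fun e => v ∈ e)).card : ℝ) ^ 2 := by
      exact_mod_cast card_triangles_at_le_sq X T hT v
    refine abs_le_of_sq_le_sq' ?_ (by positivity) |>.2
    rw [mul_pow, Real.sq_sqrt (by positivity), sq]
    gcongr
  have hsum := Finset.sum_le_sum (fun v (_ : v ∈ Finset.univ) => hv v)
  rw [← Finset.mul_sum, ← Nat.cast_sum, ← Nat.cast_sum,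
    sum_card_filter_mem_of_sized T 3 (fun t ht => (hT t ht).1),
    sum_card_filter_mem_of_sized X 2 hX] at hsum
  push_cast at hsum
  rw [hpow]
  have : 0 ≤ √(X.card : ℝ) * X.card := by positivity
  linarith
end

section
/- For every simple graph G on a finite vertex set with m edges, the number of triangles of G (3-element cliques) is at most m^{3/2} (as real numbers). -/
/-!
The triangles through a vertex `v` correspond to edges inside the neighbourhood of `v`
(the edge opposite to `v`), so their number `t v` is at most `m` and at most
`(d v).choose 2 ≤ (d v) ^ 2`, where `d v` is the degree. Hence `t v ≤ √m * d v`, the geometric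
mean of the two bounds. Summing over `v`, each triangle is counted three times, and the
handshake lemma gives `3 T ≤ √m * 2 m`, which is stronger than needed.
-/

open Finset in
/-- Geometric mean of the bounds `m` and `(degree v) ^ 2`, both obtained by sending a triangle
through `v` to the pair of its other two vertices. -/
lemma card_triangles_through_sq_le {V : Type*} [Fintype V] [DecidableEq V] (G : SimpleGraph V)
    [DecidableRel G.Adj] (v : V) :
    #{t ∈ G.cliqueFinset 3 | v ∈ t} ^ 2 ≤ #G.edgeFinset * G.degree v ^ 2 := by
  have hinj : Set.InjOn (fun t : Finset V => t.erase v)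
      ({t ∈ G.cliqueFinset 3 | v ∈ t} : Finset (Finset V)) := by
    intro s hs t ht h
    simp only [coe_filter, Set.mem_setOf_eq] at hs ht
    rw [← insert_erase hs.2, ← insert_erase ht.2]
    exact congrArg (insert v) h
  have h1 : #{t ∈ G.cliqueFinset 3 | v ∈ t} ≤ #G.edgeFinset := by
    refine le_trans (card_le_card_of_injOn (t := G.edgeFinset.image Sym2.toFinset) _ ?_ hinj)
      card_image_le
    intro t ht
    simp only [coe_filter, Set.mem_setOf_eq, SimpleGraph.mem_cliqueFinset_iff] at ht
    obtain ⟨ht, hv⟩ := ht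
    obtain ⟨a, b, hab, he⟩ := card_eq_two.1
      (show #(t.erase v) = 2 by rw [card_erase_of_mem hv, ht.card_eq])
    have ha : a ∈ t := mem_of_mem_erase (a := v) (by simp [he])
    have hb : b ∈ t := mem_of_mem_erase (a := v) (by simp [he])
    simp only [coe_image, Set.mem_image]
    exact ⟨s(a, b), by simpa using ht.isClique ha hb hab, by
      rw [he]; ext x; simp⟩
  have h2 : #{t ∈ G.cliqueFinset 3 | v ∈ t} ≤ G.degree v ^ 2 := by
    refine le_trans (card_le_card_of_injOn
      (t := (G.neighborFinset v).powersetCard 2) _ ?_ hinj) ?_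
    · intro t ht
      simp only [coe_filter, Set.mem_setOf_eq, SimpleGraph.mem_cliqueFinset_iff] at ht
      obtain ⟨ht, hv⟩ := ht
      refine mem_coe.2 (mem_powersetCard.2 ⟨fun x hx => ?_, ?_⟩)
      · rw [SimpleGraph.mem_neighborFinset]
        exact ht.isClique hv (mem_of_mem_erase hx) (ne_of_mem_erase hx).symm
      · rw [card_erase_of_mem hv, ht.card_eq]
    · rw [card_powersetCard]
      exact Nat.choose_le_pow _ _
  rw [sq]
  exact Nat.mul_le_mul h1 h2

/-- For every simple graph `G` on a finite vertex set with `m` edges, the number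
of triangles of `G` (3-element cliques) is at most `m^{3/2}`. -/
theorem stmt_1 {V : Type*} [Fintype V] (G : SimpleGraph V) :
    ({t : Finset V | G.IsNClique 3 t}.ncard : ℝ)
      ≤ (G.edgeSet.ncard : ℝ) ^ ((3 : ℝ) / 2) := by
  classical
  have hT : {t : Finset V | G.IsNClique 3 t}.ncard = (G.cliqueFinset 3).card := by
    rw [← Set.ncard_coe_finset, SimpleGraph.coe_cliqueFinset]; rfl
  have hm : G.edgeSet.ncard = G.edgeFinset.card := by
    rw [← Set.ncard_coe_finset, SimpleGraph.coe_edgeFinset]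
  rw [hT, hm]
  have hcount : ∑ v : V, ((G.cliqueFinset 3).filter (v ∈ ·)).card
      = 3 * (G.cliqueFinset 3).card := by
    have h := Finset.sum_card_bipartiteAbove_eq_sum_card_bipartiteBelow
      (s := (Finset.univ : Finset V)) (t := G.cliqueFinset 3) (fun v t => v ∈ t)
    simp only [Finset.bipartiteAbove, Finset.bipartiteBelow, Finset.filter_univ_mem] at h
    rw [h, Finset.sum_const_nat (m := 3), mul_comm]
    intro t ht
    exact (SimpleGraph.mem_cliqueFinset_iff.1 ht).card_eq
  have hloc (v : V) : (((G.cliqueFinset 3).filter (v ∈ ·)).card : ℝ)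
      ≤ √(G.edgeFinset.card : ℝ) * (G.degree v : ℝ) := by
    refine abs_le_of_sq_le_sq' ?_ (by positivity) |>.2
    rw [mul_pow, Real.sq_sqrt (Nat.cast_nonneg _)]
    exact_mod_cast card_triangles_through_sq_le G v
  have hsum := Finset.sum_le_sum fun v (_ : v ∈ Finset.univ) => hloc v
  have hshake : ∑ v, (G.degree v : ℝ) = 2 * G.edgeFinset.card := by
    exact_mod_cast G.sum_degrees_eq_twice_card_edges
  rw [← Finset.mul_sum, hshake, ← Nat.cast_sum, hcount] at hsum
  push_cast at hsum
  have hpow : (G.edgeFinset.card : ℝ) ^ ((3 : ℝ) / 2)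
      = G.edgeFinset.card * √(G.edgeFinset.card : ℝ) := by
    rw [show (3 : ℝ) / 2 = 1 + 1 / 2 by norm_num,
      Real.rpow_add_of_nonneg (Nat.cast_nonneg _) (by norm_num) (by norm_num),
      Real.rpow_one, ← Real.sqrt_eq_rpow]
  rw [hpow]
  have : 0 ≤ (G.edgeFinset.card : ℝ) * √(G.edgeFinset.card : ℝ) := by positivity
  linarith
end
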